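/- ŵ(μ) = v̂(μ) holds for every prior μ ∈ ΔΘ if and only if ŵ(μ) ≥ v(μ) for every μ ∈ ΔΘ. (That is, the sender has a unique equilibrium payoff at every prior if and only if ŵ ≥ v pointwise.) -/

import Mathlib

open MeasureTheory


/-- The Borel σ-algebra on the space of probability measures (the σ-algebra generated by
evaluation maps, i.e. the subspace σ-algebra of the Giry σ-algebra; for metrizable spaces
this is the Borel σ-algebra of the weak* topology). -/
instance probMeasurableSpace {Ω : Type*} [MeasurableSpace Ω] :
    MeasurableSpace (ProbabilityMeasure Ω) :=
  MeasurableSpace.comap (fun μ => (μ : Measure Ω)) inferInstance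

/-- Sender's expected utility from action `a` at belief `μ`. -/
noncomputable def senderEU {A Θ : Type*} [MeasurableSpace Θ]
    (uS : A → Θ → ℝ) (μ : ProbabilityMeasure Θ) (a : A) : ℝ :=
  ∫ θ, uS a θ ∂(μ : Measure Θ)

/-- The receiver's best responses `A*_R(μ)` at belief `μ`. -/
def bestResponses {A Θ : Type*} [MeasurableSpace Θ]
    (uR : A → Θ → ℝ) (μ : ProbabilityMeasure Θ) : Set A :=
  {a | ∀ a' : A, ∫ θ, uR a' θ ∂(μ : Measure Θ) ≤ ∫ θ, uR a θ ∂(μ : Measure Θ)}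

/-- The sender's upper value function `v`. -/
noncomputable def vFun {A Θ : Type*} [MeasurableSpace Θ]
    (uS uR : A → Θ → ℝ) (μ : ProbabilityMeasure Θ) : ℝ :=
  sSup (senderEU uS μ '' bestResponses uR μ)

/-- The sender's lower value function `w`. -/
noncomputable def wFun {A Θ : Type*} [MeasurableSpace Θ]
    (uS uR : A → Θ → ℝ) (μ : ProbabilityMeasure Θ) : ℝ :=
  sInf (senderEU uS μ '' bestResponses uR μ)

/-- The set `I(μ0)` of information policies: distributions over posteriors with
barycenter equal to the prior `μ0`. -/
def infoPolicies {Θ : Type*} [MeasurableSpace Θ] (μ0 : ProbabilityMeasure Θ) :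
    Set (ProbabilityMeasure (ProbabilityMeasure Θ)) :=
  {p | ∀ B : Set Θ, MeasurableSet B →
    ∫ ν, ((ν : Measure Θ) B).toReal ∂(p : Measure (ProbabilityMeasure Θ))
      = ((μ0 : Measure Θ) B).toReal}

/-- `v̂(μ0)`: the sender's best equilibrium (Bayesian persuasion) value. -/
noncomputable def vHat {A Θ : Type*} [MeasurableSpace Θ]
    (uS uR : A → Θ → ℝ) (μ0 : ProbabilityMeasure Θ) : ℝ :=
  sSup ((fun p : ProbabilityMeasure (ProbabilityMeasure Θ) =>
    ∫ ν, vFun uS uR ν ∂(p : Measure (ProbabilityMeasure Θ))) '' infoPolicies μ0)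

/-- `ŵ(μ0)`: the sender's worst equilibrium value. -/
noncomputable def wHat {A Θ : Type*} [MeasurableSpace Θ]
    (uS uR : A → Θ → ℝ) (μ0 : ProbabilityMeasure Θ) : ℝ :=
  sSup ((fun p : ProbabilityMeasure (ProbabilityMeasure Θ) =>
    ∫ ν, wFun uS uR ν ∂(p : Measure (ProbabilityMeasure Θ))) '' infoPolicies μ0)

/-!
Write `F̂ μ` for the best value of `∫ F dp` over the splittings `p` of `μ`. The function `v` is
upper semicontinuous and `w` is lower semicontinuous, by compactness of the action space, and
`w ≤ v` gives `ŵ ≤ v̂`. The point mass at `μ` splits `μ`, so `v ≤ v̂`. What remains is that `v ≤ ŵ`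
implies `v̂ ≤ ŵ`: in a splitting `p` of `μ`, each belief `ν` should be split again so that `w` is
worth `v ν` up to `ε`, and the second splitting has to depend measurably on `ν`.

A splitting `q` of `ν` that is good for `w` is transported to all nearby beliefs `b` as follows. Run
an experiment with finitely many signals whose likelihoods form a continuous partition of unity
subordinate to small balls. Replacing the state of a belief by a draw from the posterior of `b`
after the signal it generates moves the belief little in the Lévy–Prokhorov metric, hence costs
little by lower semicontinuity of `w` and Fatou's lemma, and turns `q` into a splitting of a belief
that has the posteriors of `b` but the signal probabilities of `ν`. As signal probabilities are
continuous in the prior, a share `ρ < 1` of it fits below `b`, and the experiment splits what is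
left. The construction is measurable in `b`, upper semicontinuity of `v` makes it good enough near
`ν`, and countably many such neighbourhoods cover the space of beliefs.
-/

open Set Filter Topology Metric
open scoped ENNReal NNReal BoundedContinuousFunction

section Beliefs

variable {X Ω : Type*} [MeasurableSpace X] [MeasurableSpace Ω]

lemma measurable_probabilityMeasure_coe :
    Measurable fun μ : ProbabilityMeasure Ω => (μ : Measure Ω) :=
  comap_measurable _

lemma measurable_belief_apply {B : Set Ω} (hB : MeasurableSet B) :
    Measurable fun μ : ProbabilityMeasure Ω => (μ : Measure Ω) B :=
  (Measure.measurable_coe hB).comp measurable_probabilityMeasure_coe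

lemma measurable_lintegral_belief {f : Ω → ℝ≥0∞} (hf : Measurable f) :
    Measurable fun μ : ProbabilityMeasure Ω => ∫⁻ ω, f ω ∂(μ : Measure Ω) :=
  (Measure.measurable_lintegral hf).comp measurable_probabilityMeasure_coe

lemma measurable_toProbabilityMeasure_iff {g : X → ProbabilityMeasure Ω} :
    Measurable g ↔ ∀ B, MeasurableSet B → Measurable fun x => (g x : Measure Ω) B :=
  ⟨fun hg _ hB => (measurable_belief_apply hB).comp hg,
    fun hg => measurable_comap_iff.2 (Measure.measurable_of_measurable_coe _ hg)⟩

/-- The mean of a distribution over beliefs; `p` splits the prior `μ` if `barycenter p = μ`. -/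
noncomputable def barycenter (p : Measure (ProbabilityMeasure Ω)) : Measure Ω :=
  p.bind fun ν => (ν : Measure Ω)

lemma barycenter_apply (p : Measure (ProbabilityMeasure Ω)) {B : Set Ω} (hB : MeasurableSet B) :
    barycenter p B = ∫⁻ ν, (ν : Measure Ω) B ∂p :=
  Measure.bind_apply hB measurable_probabilityMeasure_coe.aemeasurable

lemma lintegral_barycenter (p : Measure (ProbabilityMeasure Ω)) {f : Ω → ℝ≥0∞}
    (hf : Measurable f) : ∫⁻ ω, f ω ∂(barycenter p) = ∫⁻ ν, ∫⁻ ω, f ω ∂(ν : Measure Ω) ∂p :=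
  Measure.lintegral_bind measurable_probabilityMeasure_coe.aemeasurable hf.aemeasurable

lemma barycenter_univ (p : Measure (ProbabilityMeasure Ω)) : barycenter p univ = p univ := by
  simp [barycenter_apply]

lemma barycenter_bind (p : Measure (ProbabilityMeasure Ω))
    {κ : ProbabilityMeasure Ω → Measure (ProbabilityMeasure Ω)} (hκ : Measurable κ)
    (hκ_barycenter : ∀ ν, barycenter (κ ν) = ν) : barycenter (p.bind κ) = barycenter p :=
  (Measure.bind_bind hκ.aemeasurable measurable_probabilityMeasure_coe.aemeasurable).trans
    (congrArg p.bind (funext hκ_barycenter))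

lemma isProbabilityMeasure_of_barycenter_eq {p : Measure (ProbabilityMeasure Ω)}
    {μ : ProbabilityMeasure Ω} (hp : barycenter p = μ) : IsProbabilityMeasure p :=
  ⟨by rw [← barycenter_univ, hp, measure_univ]⟩

lemma mem_infoPolicies_iff {μ : ProbabilityMeasure Ω}
    {p : ProbabilityMeasure (ProbabilityMeasure Ω)} :
    p ∈ infoPolicies μ ↔ barycenter (p : Measure (ProbabilityMeasure Ω)) = μ := by
  have : IsProbabilityMeasure (barycenter (p : Measure (ProbabilityMeasure Ω))) :=
    ⟨by rw [barycenter_univ, measure_univ]⟩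
  have integral_belief_apply : ∀ B, MeasurableSet B →
      ∫ ν : ProbabilityMeasure Ω, ((ν : Measure Ω) B).toReal ∂(p : Measure (ProbabilityMeasure Ω)) =
        (barycenter (p : Measure (ProbabilityMeasure Ω)) B).toReal := by
    intro B hB
    rw [barycenter_apply _ hB, integral_toReal (measurable_belief_apply hB).aemeasurable
      (.of_forall fun ν => measure_lt_top _ _)]
  constructor
  · intro hp
    ext B hB
    exact (ENNReal.toReal_eq_toReal_iff' (measure_ne_top _ _) (measure_ne_top _ _)).1
      ((integral_belief_apply B hB).symm.trans (hp B hB))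
  · intro hp B hB
    rw [integral_belief_apply B hB, hp]

lemma diracProba_mem_infoPolicies (μ : ProbabilityMeasure Ω) :
    diracProba μ ∈ infoPolicies μ :=
  mem_infoPolicies_iff.2 (Measure.dirac_bind measurable_probabilityMeasure_coe μ)

end Beliefs

section WeakTopology

lemma opensMeasurableSpace_of_eq_iInf_induced {X ι Y : Type*} [t : TopologicalSpace X]
    [SecondCountableTopology X] [MeasurableSpace X] [TopologicalSpace Y] [MeasurableSpace Y]
    [OpensMeasurableSpace Y] {g : ι → X → Y} (hg : ∀ i, Measurable (g i))
    (ht : t = ⨅ i, .induced (g i) inferInstance) : OpensMeasurableSpace X := by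
  have hgen : t = .generateFrom (⋃ i, {s | IsOpen[.induced (g i) inferInstance] s}) := by
    simpa only [generateFrom_iUnion, TopologicalSpace.generateFrom_setOfPred_isOpen] using ht
  refine ⟨(borel_eq_generateFrom_of_subbasis hgen).trans_le (MeasurableSpace.generateFrom_le ?_)⟩
  intro s hs
  obtain ⟨i, U, hU, rfl⟩ := mem_iUnion.1 hs
  exact hg i hU.measurableSet

lemma probabilityMeasure_topology_eq_iInf_induced {Θ : Type*} [TopologicalSpace Θ]
    [MeasurableSpace Θ] [OpensMeasurableSpace Θ] :
    (inferInstance : TopologicalSpace (ProbabilityMeasure Θ)) = ⨅ f : Θ →ᵇ ℝ≥0,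
      .induced (fun μ : ProbabilityMeasure Θ => ∫⁻ θ, f θ ∂(μ : Measure Θ)) inferInstance := by
  refine TopologicalSpace.ext_nhds fun μ => eq_of_forall_le_iff fun F => ?_
  refine (ProbabilityMeasure.tendsto_iff_forall_lintegral_tendsto (F := F) (μs := id)).trans ?_
  simp only [nhds_iInf, nhds_induced, le_iInf_iff, ← tendsto_iff_comap, id]

instance opensMeasurableSpace_probabilityMeasure {Θ : Type*} [TopologicalSpace Θ]
    [CompactSpace Θ] [TopologicalSpace.MetrizableSpace Θ] [MeasurableSpace Θ] [BorelSpace Θ] :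
    OpensMeasurableSpace (ProbabilityMeasure Θ) :=
  opensMeasurableSpace_of_eq_iInf_induced
    (fun f : Θ →ᵇ ℝ≥0 => measurable_lintegral_belief f.measurable_coe_ennreal_comp)
    probabilityMeasure_topology_eq_iInf_induced

end WeakTopology

section Selection

lemma exists_measurable_forall_of_eventually {X Y : Type*} [TopologicalSpace X] [LindelofSpace X]
    [MeasurableSpace X] [OpensMeasurableSpace X] [MeasurableSpace Y] {P : X → Y → Prop}
    (hP : ∀ x, ∃ f : X → Y, Measurable f ∧ ∀ᶠ x' in 𝓝 x, P x' (f x')) :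
    ∃ f : X → Y, Measurable f ∧ ∀ x, P x (f x) := by
  classical
  choose f hf hfP using hP
  rcases isEmpty_or_nonempty X with hX | ⟨⟨x₀⟩⟩
  · exact ⟨hX.elim, measurable_of_empty _, hX.elim⟩
  obtain ⟨t, ht, htU⟩ := countable_cover_nhds_interior hfP
  have hcover : ∀ x, ∃ y ∈ t, x ∈ interior {x' | P x' (f y x')} := fun x => by
    have hx : x ∈ ⋃ y ∈ t, interior {x' | P x' (f y x')} := htU ▸ mem_univ x
    simpa only [mem_iUnion, exists_prop] using hx
  obtain ⟨e, rfl⟩ := ht.exists_eq_range ((hcover x₀).imp fun _ h => h.1)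
  simp only [exists_range_iff] at hcover
  exact ⟨fun x => f (e (Nat.find (hcover x))) x,
    Measurable.find (p := fun n x => x ∈ interior {x' | P x' (f (e n) x')})
      (fun n => hf (e n)) (fun n => isOpen_interior.measurableSet) hcover,
    fun x => interior_subset (s := {x' | P x' (f _ x')}) (Nat.find_spec (hcover x))⟩

end Selection

section Perturbation

variable {Θ : Type*} [PseudoMetricSpace Θ] [MeasurableSpace Θ]

lemma levyProkhorovDist_bind_le [OpensMeasurableSpace Θ] (s : Measure Θ) [IsProbabilityMeasure s]
    {K : Θ → Measure Θ} (hK : Measurable K) (hK_prob : ∀ θ, IsProbabilityMeasure (K θ)) {r : ℝ}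
    (hr : 0 ≤ r) (hK_near : ∀ θ, K θ (ball θ r)ᶜ = 0) : levyProkhorovDist (s.bind K) s ≤ r := by
  have := isProbabilityMeasure_bind (m := s) hK.aemeasurable (.of_forall hK_prob)
  refine levyProkhorovDist_le_of_forall_le _ _ hr fun ε B hε hB => le_add_right ?_
  have hK_le : ∀ θ, K θ B ≤ (thickening ε B).indicator 1 θ := by
    intro θ
    by_cases hθ : θ ∈ thickening ε B
    · simpa [hθ] using prob_le_one
    · have : B ⊆ (ball θ r)ᶜ := fun θ' hθ' hball =>
        hθ (mem_thickening_iff.2 ⟨θ', hθ', (mem_ball'.1 hball).trans hε⟩)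
      simp [measure_mono_null this (hK_near θ)]
  calc s.bind K B = ∫⁻ θ, K θ B ∂s := Measure.bind_apply hB hK.aemeasurable
    _ ≤ ∫⁻ θ, (thickening ε B).indicator 1 θ ∂s := lintegral_mono hK_le
    _ = s (thickening ε B) := lintegral_indicator_one isOpen_thickening.measurableSet

lemma exists_forall_levyProkhorovDist_le_lt_lintegral [TopologicalSpace.SeparableSpace Θ]
    [OpensMeasurableSpace Θ] {W : ProbabilityMeasure Θ → ℝ≥0∞} (hW : LowerSemicontinuous W)
    (hW_meas : Measurable W) (q : Measure (ProbabilityMeasure Θ)) {c : ℝ≥0∞}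
    (hc : c < ∫⁻ s, W s ∂q) :
    ∃ r > 0, ∀ T : ProbabilityMeasure Θ → ProbabilityMeasure Θ, Measurable T →
      (∀ s, levyProkhorovDist (T s : Measure Θ) (s : Measure Θ) ≤ r) → c < ∫⁻ s, W (T s) ∂q := by
  by_contra! hcon
  obtain ⟨r, -, hr_pos, hr⟩ := exists_seq_strictAnti_tendsto (0 : ℝ)
  choose T hT hT_near hT_le using fun n => hcon (r n) (hr_pos n)
  have hT_tendsto : ∀ s, Tendsto (fun n => T n s) atTop (𝓝 s) := fun s => by
    rw [LevyProkhorov.probabilityMeasureHomeomorph.isInducing.tendsto_nhds_iff,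
      tendsto_iff_dist_tendsto_zero]
    exact squeeze_zero (fun n => dist_nonneg) (fun n => hT_near n s) hr
  have hfatou : ∫⁻ s, W s ∂q ≤ c := calc
    ∫⁻ s, W s ∂q ≤ ∫⁻ s, liminf (fun n => W (T n s)) atTop ∂q :=
      lintegral_mono fun s => (hW.le_liminf s).trans (liminf_le_liminf_of_le (hT_tendsto s))
    _ ≤ liminf (fun n => ∫⁻ s, W (T n s) ∂q) atTop :=
      lintegral_liminf_le fun n => hW_meas.comp (hT n)
    _ ≤ c := liminf_le_of_frequently_le' (.of_forall hT_le)
  exact hfatou.not_gt hc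

end Perturbation

section Posterior

variable {Θ : Type*} [TopologicalSpace Θ] [MeasurableSpace Θ]

/-- The posterior belief of an agent with prior `μ` after a signal whose probability in state `θ` is
`f θ`. A signal of probability zero leads to the point mass at the default state `x`. -/
noncomputable def signalPosterior (f : Θ →ᵇ ℝ≥0) (x : Θ) (μ : ProbabilityMeasure Θ) :
    ProbabilityMeasure Θ :=
  open Classical in
  ⟨if ∫⁻ θ, f θ ∂(μ : Measure Θ) = 0 then Measure.dirac x
    else (∫⁻ θ, f θ ∂(μ : Measure Θ))⁻¹ • (μ : Measure Θ).withDensity fun θ => f θ, by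
    split_ifs with h
    · infer_instance
    · exact ⟨by simpa using ENNReal.inv_mul_cancel h (f.lintegral_lt_top_of_nnreal _).ne⟩⟩

variable (f : Θ →ᵇ ℝ≥0) (x : Θ)

lemma signalPosterior_compl_eq_zero {S : Set Θ} (hS : MeasurableSet S) (hx : x ∈ S)
    (hf : ∀ θ, f θ ≠ 0 → θ ∈ S) (μ : ProbabilityMeasure Θ) :
    (signalPosterior f x μ : Measure Θ) Sᶜ = 0 := by
  rw [signalPosterior, ProbabilityMeasure.coe_mk]
  split_ifs with h
  · simp [hS.compl, hx]
  · have hf_zero : ∀ θ ∈ Sᶜ, (f θ : ℝ≥0∞) = 0 := fun θ hθ => by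
      simpa using not_imp_comm.1 (hf θ) hθ
    simp [withDensity_apply _ hS.compl, setLIntegral_congr_fun hS.compl hf_zero]

variable [OpensMeasurableSpace Θ]

lemma smul_signalPosterior (μ : ProbabilityMeasure Θ) :
    (∫⁻ θ, f θ ∂(μ : Measure Θ)) • (signalPosterior f x μ : Measure Θ) =
      (μ : Measure Θ).withDensity fun θ => f θ := by
  rw [signalPosterior, ProbabilityMeasure.coe_mk]
  split_ifs with h
  · rw [h, zero_smul, eq_comm, withDensity_eq_zero_iff f.measurable_coe_ennreal_comp.aemeasurable,
      ← lintegral_eq_zero_iff f.measurable_coe_ennreal_comp, h]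
  · rw [smul_smul, ENNReal.mul_inv_cancel h (f.lintegral_lt_top_of_nnreal _).ne, one_smul]

lemma measurable_signalPosterior : Measurable (signalPosterior f x) := by
  classical
  have hf := measurable_lintegral_belief f.measurable_coe_ennreal_comp
  refine measurable_toProbabilityMeasure_iff.2 fun B hB => ?_
  have heq : (fun μ => (signalPosterior f x μ : Measure Θ) B) =
      fun μ : ProbabilityMeasure Θ => if ∫⁻ θ, f θ ∂(μ : Measure Θ) = 0 then Measure.dirac x B else
        (∫⁻ θ, f θ ∂(μ : Measure Θ))⁻¹ * ∫⁻ θ, B.indicator (fun θ => (f θ : ℝ≥0∞)) θ ∂μ := by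
    ext μ
    rw [signalPosterior, ProbabilityMeasure.coe_mk]
    split_ifs with h
    · rfl
    · simp [withDensity_apply _ hB, lintegral_indicator hB]
  rw [heq]
  exact .ite (hf (measurableSet_singleton 0)) measurable_const
    (hf.inv.mul (measurable_lintegral_belief (f.measurable_coe_ennreal_comp.indicator hB)))

end Posterior

/-- A statistical experiment with finitely many signals: `likelihood i θ` is the probability of
signal `i` in state `θ`. Continuity makes the signal probabilities continuous in the prior. -/
structure Experiment (ι Θ : Type*) [Fintype ι] [TopologicalSpace Θ] where
  likelihood : ι → Θ →ᵇ ℝ≥0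
  sum_likelihood : ∀ θ, ∑ i, likelihood i θ = 1

namespace Experiment

section Garbling

variable {ι Θ : Type*} [Fintype ι] [TopologicalSpace Θ] [MeasurableSpace Θ] (E : Experiment ι Θ)

/-- The probability of signal `i` under the belief `μ`. -/
noncomputable def signalProb (μ : ProbabilityMeasure Θ) (i : ι) : ℝ≥0∞ :=
  ∫⁻ θ, E.likelihood i θ ∂(μ : Measure Θ)

/-- The random replacement of the state that draws a signal `i` of the experiment and then a new
state from `m i`. -/
noncomputable def resample (m : ι → ProbabilityMeasure Θ) (θ : Θ) : Measure Θ :=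
  ∑ i, (E.likelihood i θ : ℝ≥0∞) • (m i : Measure Θ)

lemma resample_apply (m : ι → ProbabilityMeasure Θ) (θ : Θ) (B : Set Θ) :
    E.resample m θ B = ∑ i, E.likelihood i θ * (m i : Measure Θ) B := by
  simp [resample, Measure.finsetSum_apply]

lemma isProbabilityMeasure_resample (m : ι → ProbabilityMeasure Θ) (θ : Θ) :
    IsProbabilityMeasure (E.resample m θ) := by
  refine ⟨?_⟩
  simp only [resample_apply, measure_univ, mul_one]
  exact_mod_cast E.sum_likelihood θ

variable [OpensMeasurableSpace Θ]

lemma measurable_resample (m : ι → ProbabilityMeasure Θ) : Measurable (E.resample m) := by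
  refine Measure.measurable_of_measurable_coe _ fun B _ => ?_
  simp only [resample_apply]
  exact Finset.measurable_sum _ fun i _ =>
    (E.likelihood i).measurable_coe_ennreal_comp.mul_const _

lemma measurable_signalProb (i : ι) : Measurable fun μ => E.signalProb μ i :=
  measurable_lintegral_belief (E.likelihood i).measurable_coe_ennreal_comp

lemma continuous_signalProb (i : ι) : Continuous fun μ => E.signalProb μ i :=
  continuous_iff_continuousAt.2 fun _ =>
    ProbabilityMeasure.tendsto_iff_forall_lintegral_tendsto.1 tendsto_id (E.likelihood i)

/-- The law of the state resampled from a state of law `s`. -/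
noncomputable def garble (m : ι → ProbabilityMeasure Θ) (s : ProbabilityMeasure Θ) :
    ProbabilityMeasure Θ :=
  ⟨(s : Measure Θ).bind (E.resample m),
    isProbabilityMeasure_bind (E.measurable_resample m).aemeasurable
      (.of_forall (E.isProbabilityMeasure_resample m))⟩

lemma garble_apply (m : ι → ProbabilityMeasure Θ) (s : ProbabilityMeasure Θ) {B : Set Θ}
    (hB : MeasurableSet B) :
    (E.garble m s : Measure Θ) B = ∑ i, E.signalProb s i * (m i : Measure Θ) B := by
  have hlik : ∀ i, Measurable fun θ => (E.likelihood i θ : ℝ≥0∞) := fun i =>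
    (E.likelihood i).measurable_coe_ennreal_comp
  simp only [garble, ProbabilityMeasure.coe_mk, resample_apply, signalProb,
    Measure.bind_apply hB (E.measurable_resample m).aemeasurable]
  rw [lintegral_finsetSum _ fun i _ => (hlik i).mul_const _]
  simp only [lintegral_mul_const _ (hlik _)]

lemma measurable_garble (m : ι → ProbabilityMeasure Θ) : Measurable (E.garble m) := by
  refine measurable_toProbabilityMeasure_iff.2 fun B hB => ?_
  simp only [garble_apply _ _ _ hB]
  exact Finset.measurable_sum _ fun i _ => (E.measurable_signalProb i).mul_const _

lemma measurable_uncurry_garble {X : Type*} [MeasurableSpace X]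
    {m : X → ι → ProbabilityMeasure Θ} (hm : ∀ i, Measurable fun x => m x i) :
    Measurable fun xs : X × ProbabilityMeasure Θ => E.garble (m xs.1) xs.2 := by
  refine measurable_toProbabilityMeasure_iff.2 fun B hB => ?_
  simp only [garble_apply _ _ _ hB]
  exact Finset.measurable_sum _ fun i _ => ((E.measurable_signalProb i).comp measurable_snd).mul
    (measurable_toProbabilityMeasure_iff.1 ((hm i).comp measurable_fst) B hB)

lemma lintegral_signalProb {q : Measure (ProbabilityMeasure Θ)} {ν : ProbabilityMeasure Θ}
    (hq : barycenter q = ν) (i : ι) :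
    ∫⁻ s, E.signalProb s i ∂q = E.signalProb ν i := by
  rw [signalProb, ← hq, lintegral_barycenter q (E.likelihood i).measurable_coe_ennreal_comp]
  rfl

lemma lintegral_garble_apply {q : Measure (ProbabilityMeasure Θ)} {ν : ProbabilityMeasure Θ}
    (hq : barycenter q = ν) (m : ι → ProbabilityMeasure Θ) {B : Set Θ}
    (hB : MeasurableSet B) :
    ∫⁻ s, (E.garble m s : Measure Θ) B ∂q = ∑ i, E.signalProb ν i * (m i : Measure Θ) B := by
  simp only [garble_apply _ _ _ hB]
  rw [lintegral_finsetSum _ fun i _ => (E.measurable_signalProb i).mul_const _]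
  simp only [lintegral_mul_const _ (E.measurable_signalProb _), E.lintegral_signalProb hq]

/-- The posterior beliefs after each signal of the experiment, for the prior `b`. -/
noncomputable def posterior (x : ι → Θ) (b : ProbabilityMeasure Θ) (i : ι) : ProbabilityMeasure Θ :=
  signalPosterior (E.likelihood i) (x i) b

lemma measurable_posterior (x : ι → Θ) (i : ι) : Measurable fun b => E.posterior x b i :=
  measurable_signalPosterior (E.likelihood i) (x i)

lemma sum_signalProb_mul_posterior_apply (x : ι → Θ) (b : ProbabilityMeasure Θ) {B : Set Θ}
    (hB : MeasurableSet B) :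
    ∑ i, E.signalProb b i * (E.posterior x b i : Measure Θ) B = (b : Measure Θ) B := by
  have hbayes : ∀ i, E.signalProb b i * (E.posterior x b i : Measure Θ) B =
      ∫⁻ θ in B, E.likelihood i θ ∂(b : Measure Θ) := fun i => by
    rw [← withDensity_apply _ hB, ← smul_signalPosterior _ (x i)]
    rfl
  have hsum : ∀ θ, ∑ i, (E.likelihood i θ : ℝ≥0∞) = 1 := fun θ => by
    exact_mod_cast E.sum_likelihood θ
  simp only [hbayes]
  rw [← lintegral_finsetSum _ fun i _ => (E.likelihood i).measurable_coe_ennreal_comp]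
  simp [hsum]

/-- A transport of the splitting `q` of `ν` to the prior `b`. With weight `ρ` it draws a belief from
`q` and resamples its state from the posteriors of `b`; the remaining mass of `b` is split according
to the experiment itself. It splits `b` as soon as no signal is less than `ρ` times as likely under
`b` as under `ν`; otherwise the subtraction truncates. -/
noncomputable def splitting (x : ι → Θ) (ρ : ℝ≥0∞) (ν : ProbabilityMeasure Θ)
    (q : Measure (ProbabilityMeasure Θ)) (b : ProbabilityMeasure Θ) :
    Measure (ProbabilityMeasure Θ) :=
  ρ • q.map (E.garble (E.posterior x b)) +
    ∑ i, (E.signalProb b i - ρ * E.signalProb ν i) • Measure.dirac (E.posterior x b i)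

variable {q : Measure (ProbabilityMeasure Θ)} {x : ι → Θ} {ρ : ℝ≥0∞} {ν : ProbabilityMeasure Θ}

lemma lintegral_splitting (b : ProbabilityMeasure Θ) {g : ProbabilityMeasure Θ → ℝ≥0∞}
    (hg : Measurable g) :
    ∫⁻ s, g s ∂(E.splitting x ρ ν q b) = ρ * ∫⁻ s, g (E.garble (E.posterior x b) s) ∂q +
      ∑ i, (E.signalProb b i - ρ * E.signalProb ν i) * g (E.posterior x b i) := by
  simp [splitting, lintegral_add_measure, lintegral_finsetSum_measure,
    lintegral_map hg (E.measurable_garble _), lintegral_dirac' _ hg]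

lemma barycenter_splitting (hq : barycenter q = ν) {b : ProbabilityMeasure Θ}
    (hb : ∀ i, ρ * E.signalProb ν i ≤ E.signalProb b i) :
    barycenter (E.splitting x ρ ν q b) = b := by
  ext B hB
  rw [barycenter_apply _ hB, E.lintegral_splitting b (measurable_belief_apply hB),
    E.lintegral_garble_apply hq _ hB, Finset.mul_sum, ← Finset.sum_add_distrib,
    ← E.sum_signalProb_mul_posterior_apply x b hB]
  refine Finset.sum_congr rfl fun i _ => ?_
  rw [← mul_assoc, ← add_mul, add_tsub_cancel_of_le (hb i)]

lemma measurable_splitting [SFinite q] : Measurable (E.splitting x ρ ν q) := by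
  have hpost := E.measurable_posterior x
  refine Measure.measurable_of_measurable_coe _ fun S hS => ?_
  have hind : Measurable (S.indicator (1 : ProbabilityMeasure Θ → ℝ≥0∞)) :=
    measurable_one.indicator hS
  simp only [← lintegral_indicator_one hS, E.lintegral_splitting _ hind]
  have hgarble : Measurable fun b =>
      ∫⁻ s, S.indicator (1 : ProbabilityMeasure Θ → ℝ≥0∞) (E.garble (E.posterior x b) s) ∂q :=
    (hind.comp (E.measurable_uncurry_garble hpost)).lintegral_prod_right'
  exact (hgarble.const_mul ρ).add (Finset.measurable_sum _ fun i _ =>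
    ((E.measurable_signalProb i).sub_const _).mul (hind.comp (hpost i)))

lemma eventually_mul_signalProb_le (hρ : ρ < 1) (ν : ProbabilityMeasure Θ) :
    ∀ᶠ b in 𝓝 ν, ∀ i, ρ * E.signalProb ν i ≤ E.signalProb b i := by
  refine eventually_all.2 fun i => ?_
  rcases eq_or_ne (E.signalProb ν i) 0 with hzero | hzero
  · simp [hzero]
  · have hfin : E.signalProb ν i ≠ ∞ := ((E.likelihood i).lintegral_lt_top_of_nnreal _).ne
    have hlt : ρ * E.signalProb ν i < E.signalProb ν i := by
      simpa using ENNReal.mul_lt_mul_left hzero hfin hρ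
    exact ((E.continuous_signalProb i).tendsto ν).eventually_const_le hlt

end Garbling

section Localization

variable {Θ : Type*} [PseudoMetricSpace Θ]

lemma exists_likelihood_subset_ball [CompactSpace Θ] {r : ℝ} (hr : 0 < r) :
    ∃ (t : Finset Θ) (E : Experiment t Θ), ∀ i θ, E.likelihood i θ ≠ 0 → θ ∈ ball (i : Θ) r := by
  obtain ⟨t, -, ht, hcover⟩ := finite_cover_balls_of_compact (isCompact_univ (X := Θ)) hr
  lift t to Finset Θ using ht
  obtain ⟨f, hf⟩ := PartitionOfUnity.exists_isSubordinate (X := Θ) isClosed_univ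
    (fun i : t => ball (i : Θ) r) (fun _ => isOpen_ball) (by simpa [iUnion_subtype] using hcover)
  refine ⟨t, ⟨fun i => .mkOfCompact ⟨fun θ => (f i θ).toNNReal, by fun_prop⟩, fun θ => ?_⟩,
    fun i θ hθ => hf i (subset_tsupport _ fun hzero => hθ ?_)⟩
  · have hsum := f.sum_eq_one (mem_univ θ)
    rw [finsum_eq_sum_of_fintype] at hsum
    simpa [← Real.toNNReal_sum_of_nonneg fun i _ => f.nonneg i θ] using hsum
  · simp [hzero]

variable [MeasurableSpace Θ] [OpensMeasurableSpace Θ] {ι : Type*} [Fintype ι]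

lemma levyProkhorovDist_garble_le (E : Experiment ι Θ) {x : ι → Θ} {r : ℝ} (hr : 0 ≤ r)
    (hE : ∀ i θ, E.likelihood i θ ≠ 0 → θ ∈ ball (x i) r) {m : ι → ProbabilityMeasure Θ}
    (hm : ∀ i, (m i : Measure Θ) (ball (x i) r)ᶜ = 0) (s : ProbabilityMeasure Θ) :
    levyProkhorovDist (E.garble m s : Measure Θ) s ≤ r + r := by
  refine levyProkhorovDist_bind_le _ (E.measurable_resample m) (E.isProbabilityMeasure_resample m)
    (add_nonneg hr hr) fun θ => ?_
  rw [resample_apply]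
  refine Finset.sum_eq_zero fun i _ => ?_
  by_cases hi : E.likelihood i θ = 0
  · simp [hi]
  · have hsub : ball (x i) r ⊆ ball θ (r + r) := fun θ' hθ' =>
      (dist_triangle_right θ' θ (x i)).trans_lt (add_lt_add hθ' (hE i θ hi))
    rw [measure_mono_null (compl_subset_compl.2 hsub) (hm i), mul_zero]

end Localization

end Experiment

section LocalSelection

variable {Θ : Type*} [PseudoMetricSpace Θ] [CompactSpace Θ] [MeasurableSpace Θ]
  [OpensMeasurableSpace Θ]

lemma exists_measurable_barycenter_eq_lt_lintegral {W : ProbabilityMeasure Θ → ℝ≥0∞}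
    (hW : LowerSemicontinuous W) (hW_meas : Measurable W) {ν : ProbabilityMeasure Θ}
    {q : Measure (ProbabilityMeasure Θ)} (hq : barycenter q = ν)
    {c : ℝ≥0∞} (hc : c < ∫⁻ s, W s ∂q) :
    ∃ κ : ProbabilityMeasure Θ → Measure (ProbabilityMeasure Θ), Measurable κ ∧
      ∀ᶠ b in 𝓝 ν, barycenter (κ b) = b ∧ c < ∫⁻ s, W s ∂(κ b) := by
  have := isProbabilityMeasure_of_barycenter_eq hq
  obtain ⟨c', hcc', hc'⟩ := exists_between hc
  obtain ⟨ρ, hρ, hρ_one⟩ := exists_between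
    ((ENNReal.div_lt_iff (.inl (bot_le.trans_lt hcc').ne') (.inl hc'.ne_top)).2
      (hcc'.trans_eq (one_mul c').symm))
  rw [ENNReal.div_lt_iff (.inl (bot_le.trans_lt hcc').ne') (.inl hc'.ne_top)] at hρ
  obtain ⟨r, hr, hT⟩ := exists_forall_levyProkhorovDist_le_lt_lintegral hW hW_meas q hc'
  obtain ⟨t, E, hE⟩ := Experiment.exists_likelihood_subset_ball (Θ := Θ) (half_pos hr)
  refine ⟨E.splitting (↑) ρ ν q, E.measurable_splitting, ?_⟩
  filter_upwards [E.eventually_mul_signalProb_le hρ_one ν] with b hb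
  have hnear : ∀ s : ProbabilityMeasure Θ,
      levyProkhorovDist (E.garble (E.posterior (↑) b) s : Measure Θ) s ≤ r := fun s =>
    (E.levyProkhorovDist_garble_le (half_pos hr).le hE (fun i => signalPosterior_compl_eq_zero _ _
      measurableSet_ball (mem_ball_self (half_pos hr)) (hE i) b) s).trans_eq (add_halves r)
  refine ⟨E.barycenter_splitting hq hb, ?_⟩
  calc c < ρ * c' := hρ
    _ ≤ ρ * ∫⁻ s, W (E.garble (E.posterior (↑) b) s) ∂q := by
      gcongr
      exact (hT _ (E.measurable_garble _) hnear).le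
    _ ≤ ∫⁻ s, W s ∂(E.splitting (↑) ρ ν q b) := by
      rw [E.lintegral_splitting b hW_meas]
      exact le_self_add

end LocalSelection

section Envelope

/-- The value at `μ` of the best splitting of `μ` for the payoff `F`; for regular `F` this is the
smallest concave function above `F`. `vHat` and `wHat` unfold to the envelopes of `vFun` and
`wFun`. -/
noncomputable def concaveEnvelope {Ω : Type*} [MeasurableSpace Ω] (F : ProbabilityMeasure Ω → ℝ)
    (μ : ProbabilityMeasure Ω) : ℝ :=
  sSup ((fun p : ProbabilityMeasure (ProbabilityMeasure Ω) =>
    ∫ ν, F ν ∂(p : Measure (ProbabilityMeasure Ω))) '' infoPolicies μ)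

lemma abs_integral_le_of_forall_abs_le {X : Type*} [MeasurableSpace X] {P : Measure X}
    [IsProbabilityMeasure P] {F : X → ℝ} {C : ℝ} (hF : ∀ x, |F x| ≤ C) : |∫ x, F x ∂P| ≤ C := by
  simpa using norm_integral_le_of_norm_le_const (μ := P) (f := F) (.of_forall hF)

lemma lintegral_ofReal_add_const {X : Type*} [MeasurableSpace X] {P : Measure X}
    [IsProbabilityMeasure P] {F : X → ℝ} (hF_meas : Measurable F) {C : ℝ}
    (hF : ∀ x, |F x| ≤ C) :
    ∫⁻ x, ENNReal.ofReal (F x + C) ∂P = ENNReal.ofReal (∫ x, F x ∂P + C) := by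
  have hint : Integrable F P := .of_bound hF_meas.aestronglyMeasurable C (.of_forall hF)
  have hnonneg : ∀ x, 0 ≤ F x + C := fun x => by linarith [neg_le_of_abs_le (hF x)]
  rw [← ofReal_integral_eq_lintegral_ofReal (f := fun x => F x + C)
    (hint.add (integrable_const C)) (.of_forall hnonneg), integral_add hint (integrable_const C)]
  simp

section Order

variable {Ω : Type*} [MeasurableSpace Ω] {F G : ProbabilityMeasure Ω → ℝ} {C : ℝ}
  {μ : ProbabilityMeasure Ω} {p : ProbabilityMeasure (ProbabilityMeasure Ω)}

lemma integral_le_concaveEnvelope (hF : ∀ ν, |F ν| ≤ C) (hp : p ∈ infoPolicies μ) :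
    ∫ ν, F ν ∂(p : Measure (ProbabilityMeasure Ω)) ≤ concaveEnvelope F μ := by
  refine le_csSup ⟨C, ?_⟩ (mem_image_of_mem _ hp)
  rintro - ⟨q, -, rfl⟩
  exact le_of_abs_le (abs_integral_le_of_forall_abs_le hF)

lemma concaveEnvelope_le {r : ℝ}
    (hr : ∀ p ∈ infoPolicies μ, ∫ ν, F ν ∂(p : Measure (ProbabilityMeasure Ω)) ≤ r) :
    concaveEnvelope F μ ≤ r :=
  csSup_le (Set.Nonempty.image _ ⟨_, diracProba_mem_infoPolicies μ⟩) (forall_mem_image.2 hr)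

lemma exists_mem_infoPolicies_lt_integral {r : ℝ} (hr : r < concaveEnvelope F μ) :
    ∃ p ∈ infoPolicies μ, r < ∫ ν, F ν ∂(p : Measure (ProbabilityMeasure Ω)) :=
  exists_mem_image.1
    (exists_lt_of_lt_csSup (Set.Nonempty.image _ ⟨_, diracProba_mem_infoPolicies μ⟩) hr)

lemma le_concaveEnvelope (hF : ∀ ν, |F ν| ≤ C) (hF_meas : Measurable F)
    (μ : ProbabilityMeasure Ω) : F μ ≤ concaveEnvelope F μ :=
  (integral_dirac' F μ hF_meas.stronglyMeasurable).symm.trans_le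
    (integral_le_concaveEnvelope hF (diracProba_mem_infoPolicies μ))

lemma concaveEnvelope_mono (hF : ∀ ν, |F ν| ≤ C) (hF_meas : Measurable F) (hG : ∀ ν, |G ν| ≤ C)
    (hG_meas : Measurable G) (hFG : ∀ ν, F ν ≤ G ν) (μ : ProbabilityMeasure Ω) :
    concaveEnvelope F μ ≤ concaveEnvelope G μ :=
  concaveEnvelope_le fun _ hp =>
    (integral_mono (.of_bound hF_meas.aestronglyMeasurable C (.of_forall hF))
      (.of_bound hG_meas.aestronglyMeasurable C (.of_forall hG)) hFG).trans
      (integral_le_concaveEnvelope hG hp)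

end Order

section Majorization

variable {Θ : Type*} [TopologicalSpace Θ] [CompactSpace Θ] [TopologicalSpace.MetrizableSpace Θ]
  [MeasurableSpace Θ] [BorelSpace Θ]

lemma exists_measurable_forall_barycenter_eq_lt_lintegral {V W : ProbabilityMeasure Θ → ℝ≥0∞}
    (hV : UpperSemicontinuous V) (hW : LowerSemicontinuous W)
    (hVW : ∀ ν : ProbabilityMeasure Θ, ∃ q : Measure (ProbabilityMeasure Θ),
      barycenter q = ν ∧ V ν < ∫⁻ s, W s ∂q) :
    ∃ κ : ProbabilityMeasure Θ → Measure (ProbabilityMeasure Θ), Measurable κ ∧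
      ∀ b, barycenter (κ b) = b ∧ V b < ∫⁻ s, W s ∂(κ b) := by
  let := TopologicalSpace.metrizableSpaceMetric Θ
  refine exists_measurable_forall_of_eventually
    (P := fun (b : ProbabilityMeasure Θ) κb => barycenter κb = b ∧ V b < ∫⁻ s, W s ∂κb) fun ν => ?_
  obtain ⟨q, hq, hlt⟩ := hVW ν
  obtain ⟨c, hVc, hc⟩ := exists_between hlt
  obtain ⟨κ, hκ, hκ_near⟩ := exists_measurable_barycenter_eq_lt_lintegral hW hW.measurable hq hc
  exact ⟨κ, hκ, (hκ_near.and (hV ν c hVc)).mono fun b hb => ⟨hb.1.1, hb.2.trans hb.1.2⟩⟩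

lemma exists_barycenter_eq_lintegral_le {V W : ProbabilityMeasure Θ → ℝ≥0∞}
    (hV : UpperSemicontinuous V) (hW : LowerSemicontinuous W)
    (hVW : ∀ ν : ProbabilityMeasure Θ, ∃ q : Measure (ProbabilityMeasure Θ),
      barycenter q = ν ∧ V ν < ∫⁻ s, W s ∂q)
    {p : Measure (ProbabilityMeasure Θ)} {μ : ProbabilityMeasure Θ}
    (hp : barycenter p = μ) :
    ∃ q : Measure (ProbabilityMeasure Θ),
      barycenter q = μ ∧ ∫⁻ s, V s ∂p ≤ ∫⁻ s, W s ∂q := by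
  obtain ⟨κ, hκ, hκ_split⟩ := exists_measurable_forall_barycenter_eq_lt_lintegral hV hW hVW
  refine ⟨p.bind κ, (barycenter_bind p hκ fun b => (hκ_split b).1).trans hp, ?_⟩
  rw [Measure.lintegral_bind hκ.aemeasurable hW.measurable.aemeasurable]
  exact lintegral_mono fun b => (hκ_split b).2.le

theorem concaveEnvelope_le_concaveEnvelope {V W : ProbabilityMeasure Θ → ℝ} {C : ℝ}
    (hV : UpperSemicontinuous V) (hV_le : ∀ ν, |V ν| ≤ C)
    (hW : LowerSemicontinuous W) (hW_le : ∀ ν, |W ν| ≤ C)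
    (hVW : ∀ ν, V ν ≤ concaveEnvelope W ν) (μ : ProbabilityMeasure Θ) :
    concaveEnvelope V μ ≤ concaveEnvelope W μ := by
  refine concaveEnvelope_le fun p hp => le_of_forall_pos_le_add fun ε hε => ?_
  -- Adding `C` makes both payoffs nonnegative, and the extra `ε` makes the domination strict.
  have hW_le' : ∀ ν, |W ν| ≤ C + ε := fun ν => (hW_le ν).trans (le_add_of_nonneg_right hε.le)
  have hV_ofReal : UpperSemicontinuous fun ν => ENNReal.ofReal (V ν + C) :=
    (ENNReal.continuous_ofReal.comp (continuous_add_const C)).comp_upperSemicontinuous hV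
      (ENNReal.ofReal_mono.comp (add_left_mono (a := C)))
  have hW_ofReal : LowerSemicontinuous fun ν => ENNReal.ofReal (W ν + (C + ε)) :=
    (ENNReal.continuous_ofReal.comp (continuous_add_const (C + ε))).comp_lowerSemicontinuous hW
      (ENNReal.ofReal_mono.comp (add_left_mono (a := C + ε)))
  have hVW_ofReal : ∀ ν : ProbabilityMeasure Θ, ∃ q : Measure (ProbabilityMeasure Θ),
      barycenter q = ν ∧
        ENNReal.ofReal (V ν + C) < ∫⁻ s, ENNReal.ofReal (W s + (C + ε)) ∂q := fun ν => by
    obtain ⟨q, hq, hlt⟩ :=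
      exists_mem_infoPolicies_lt_integral ((sub_lt_self (V ν) hε).trans_le (hVW ν))
    refine ⟨q, mem_infoPolicies_iff.1 hq, ?_⟩
    rw [lintegral_ofReal_add_const hW.measurable hW_le', ENNReal.ofReal_lt_ofReal_iff']
    constructor <;> linarith [neg_le_of_abs_le (hV_le ν)]
  obtain ⟨q, hq, hpq⟩ := exists_barycenter_eq_lintegral_le hV_ofReal hW_ofReal hVW_ofReal
    (mem_infoPolicies_iff.1 hp)
  have := isProbabilityMeasure_of_barycenter_eq hq
  have hWq : ∫ ν, W ν ∂q ≤ concaveEnvelope W μ :=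
    integral_le_concaveEnvelope (p := ⟨q, this⟩) hW_le (mem_infoPolicies_iff.2 hq)
  rw [lintegral_ofReal_add_const hV.measurable hV_le,
    lintegral_ofReal_add_const hW.measurable hW_le', ENNReal.ofReal_le_ofReal_iff
      (by linarith [neg_le_of_abs_le (abs_integral_le_of_forall_abs_le (P := q) hW_le)])] at hpq
  linarith

end Majorization

end Envelope

section Berge

lemma wFun_eq_neg_vFun_neg {A Θ : Type*} [MeasurableSpace Θ] (uS uR : A → Θ → ℝ)
    (μ : ProbabilityMeasure Θ) :
    wFun uS uR μ = -vFun (fun a θ => -uS a θ) uR μ := by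
  have hneg : senderEU (fun a θ => -uS a θ) μ = fun a => -senderEU uS μ a :=
    funext fun a => integral_neg _
  rw [wFun, vFun, Real.sInf_def, hneg, ← image_neg_eq_neg, image_image]

variable {A Θ : Type*} [TopologicalSpace A] [TopologicalSpace Θ] [CompactSpace Θ]
  [MeasurableSpace Θ] {u uS uR : A → Θ → ℝ}

lemma exists_forall_abs_senderEU_le [CompactSpace A]
    (hS : Continuous fun p : A × Θ => uS p.1 p.2) :
    ∃ C, ∀ (μ : ProbabilityMeasure Θ) a, |senderEU uS μ a| ≤ C := by
  obtain ⟨C, hC⟩ := isCompact_univ.exists_bound_of_continuousOn hS.continuousOn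
  exact ⟨C, fun μ a => abs_integral_le_of_forall_abs_le fun θ => hC (a, θ) (mem_univ _)⟩

variable [OpensMeasurableSpace Θ]

lemma continuous_integral_continuousMap :
    Continuous fun fμ : C(Θ, ℝ) × ProbabilityMeasure Θ => ∫ θ, fμ.1 θ ∂(fμ.2 : Measure Θ) := by
  refine continuous_prod_of_continuous_lipschitzWith _ 1 (fun f => ?_) fun μ => ?_
  · exact continuous_iff_continuousAt.2 fun μ =>
      ProbabilityMeasure.tendsto_iff_forall_integral_tendsto.1 tendsto_id
        (BoundedContinuousFunction.mkOfCompact f)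
  · refine LipschitzWith.of_dist_le_mul fun f g => ?_
    have hint : ∀ h : C(Θ, ℝ), Integrable h (μ : Measure Θ) := fun h =>
      (BoundedContinuousFunction.mkOfCompact h).integrable _
    rw [Real.dist_eq, ← integral_sub (hint f) (hint g), NNReal.coe_one, one_mul]
    exact abs_integral_le_of_forall_abs_le fun θ =>
      (Real.dist_eq _ _).symm.trans_le (ContinuousMap.dist_apply_le_dist θ)

lemma continuous_integral_of_continuous_uncurry (hu : Continuous fun p : A × Θ => u p.1 p.2) :
    Continuous fun p : ProbabilityMeasure Θ × A => ∫ θ, u p.2 θ ∂(p.1 : Measure Θ) :=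
  continuous_integral_continuousMap.comp
    (((ContinuousMap.curry ⟨_, hu⟩).continuous.comp continuous_snd).prodMk continuous_fst)

lemma continuous_senderEU (hS : Continuous fun p : A × Θ => uS p.1 p.2)
    (μ : ProbabilityMeasure Θ) : Continuous (senderEU uS μ) :=
  (continuous_integral_of_continuous_uncurry hS).comp (Continuous.prodMk_right μ)

lemma isClosed_graph_bestResponses (hR : Continuous fun p : A × Θ => uR p.1 p.2) :
    IsClosed {p : ProbabilityMeasure Θ × A | p.2 ∈ bestResponses uR p.1} := by
  have heu := continuous_integral_of_continuous_uncurry hR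
  simp only [bestResponses, mem_ofPred_eq]
  rw [ofPred_forall]
  exact isClosed_iInter fun a =>
    isClosed_le (heu.comp (continuous_fst.prodMk continuous_const)) heu

variable [CompactSpace A]

lemma isCompact_image_bestResponses (hS : Continuous fun p : A × Θ => uS p.1 p.2)
    (hR : Continuous fun p : A × Θ => uR p.1 p.2) (μ : ProbabilityMeasure Θ) :
    IsCompact (senderEU uS μ '' bestResponses uR μ) :=
  ((isClosed_graph_bestResponses hR).preimage (Continuous.prodMk_right μ)).isCompact.image
    (continuous_senderEU hS μ)

lemma wFun_le_vFun (hS : Continuous fun p : A × Θ => uS p.1 p.2)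
    (hR : Continuous fun p : A × Θ => uR p.1 p.2) (μ : ProbabilityMeasure Θ) :
    wFun uS uR μ ≤ vFun uS uR μ :=
  Real.sInf_le_sSup _ (isCompact_image_bestResponses hS hR μ).bddBelow
    (isCompact_image_bestResponses hS hR μ).bddAbove

variable [Nonempty A]

lemma bestResponses_nonempty (hR : Continuous fun p : A × Θ => uR p.1 p.2)
    (μ : ProbabilityMeasure Θ) : (bestResponses uR μ).Nonempty := by
  obtain ⟨a, -, ha⟩ :=
    isCompact_univ.exists_isMaxOn univ_nonempty (continuous_senderEU hR μ).continuousOn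
  exact ⟨a, fun a' => ha (mem_univ a')⟩

lemma exists_mem_bestResponses_vFun_eq (hS : Continuous fun p : A × Θ => uS p.1 p.2)
    (hR : Continuous fun p : A × Θ => uR p.1 p.2) (μ : ProbabilityMeasure Θ) :
    ∃ a ∈ bestResponses uR μ, senderEU uS μ a = vFun uS uR μ :=
  (isCompact_image_bestResponses hS hR μ).sSup_mem ((bestResponses_nonempty hR μ).image _)

lemma exists_forall_abs_vFun_le_abs_wFun_le (hS : Continuous fun p : A × Θ => uS p.1 p.2)
    (hR : Continuous fun p : A × Θ => uR p.1 p.2) :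
    ∃ C, (∀ μ : ProbabilityMeasure Θ, |vFun uS uR μ| ≤ C) ∧
      ∀ μ : ProbabilityMeasure Θ, |wFun uS uR μ| ≤ C := by
  obtain ⟨C, hC⟩ := exists_forall_abs_senderEU_le (Θ := Θ) hS
  refine ⟨C, fun μ => ?_, fun μ => ?_⟩
  · obtain ⟨a, -, ha⟩ := exists_mem_bestResponses_vFun_eq hS hR μ
    exact ha ▸ hC μ a
  · obtain ⟨a, -, ha⟩ := exists_mem_bestResponses_vFun_eq (uS := fun a θ => -uS a θ) hS.neg hR μ
    rw [wFun_eq_neg_vFun_neg, ← ha, senderEU, integral_neg, neg_neg]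
    exact hC μ a

lemma upperSemicontinuous_vFun (hS : Continuous fun p : A × Θ => uS p.1 p.2)
    (hR : Continuous fun p : A × Θ => uR p.1 p.2) :
    UpperSemicontinuous (vFun uS uR : ProbabilityMeasure Θ → ℝ) := by
  refine upperSemicontinuous_iff_isClosed_preimage.2 fun c => ?_
  have hclosed : IsClosed {p : ProbabilityMeasure Θ × A |
      p.2 ∈ bestResponses uR p.1 ∧ c ≤ senderEU uS p.1 p.2} :=
    (isClosed_graph_bestResponses hR).inter
      (isClosed_le continuous_const (continuous_integral_of_continuous_uncurry hS))
  convert isClosedMap_fst_of_compactSpace _ hclosed using 1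
  ext μ
  constructor
  · intro hμ
    obtain ⟨a, ha, hav⟩ := exists_mem_bestResponses_vFun_eq hS hR μ
    exact ⟨(μ, a), ⟨ha, hμ.trans_eq hav.symm⟩, rfl⟩
  · rintro ⟨⟨μ, a⟩, ⟨ha, hca⟩, rfl⟩
    exact hca.trans
      (le_csSup (isCompact_image_bestResponses hS hR μ).bddAbove (mem_image_of_mem _ ha))

lemma lowerSemicontinuous_wFun (hS : Continuous fun p : A × Θ => uS p.1 p.2)
    (hR : Continuous fun p : A × Θ => uR p.1 p.2) :
    LowerSemicontinuous (wFun uS uR : ProbabilityMeasure Θ → ℝ) := by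
  have hneg := upperSemicontinuous_vFun (uS := fun a θ => -uS a θ) hS.neg hR
  intro μ y hy
  filter_upwards [hneg μ (-y) (by rw [wFun_eq_neg_vFun_neg] at hy; linarith)] with ν hν
  rw [wFun_eq_neg_vFun_neg]
  linarith

end Berge

theorem unique_payoff_all_priors_iff_general {A Θ : Type*} [TopologicalSpace A] [CompactSpace A]
    [Nonempty A] [TopologicalSpace Θ] [CompactSpace Θ] [TopologicalSpace.MetrizableSpace Θ]
    [MeasurableSpace Θ] [BorelSpace Θ] (uS uR : A → Θ → ℝ)
    (hS : Continuous fun p : A × Θ => uS p.1 p.2)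
    (hR : Continuous fun p : A × Θ => uR p.1 p.2) :
    (∀ μ : ProbabilityMeasure Θ, wHat uS uR μ = vHat uS uR μ) ↔
      (∀ μ : ProbabilityMeasure Θ, vFun uS uR μ ≤ wHat uS uR μ) := by
  obtain ⟨C, hv_le, hw_le⟩ := exists_forall_abs_vFun_le_abs_wFun_le (Θ := Θ) hS hR
  have hv := upperSemicontinuous_vFun (Θ := Θ) hS hR
  have hw := lowerSemicontinuous_wFun (Θ := Θ) hS hR
  constructor
  · intro heq μ
    rw [heq μ]
    exact le_concaveEnvelope hv_le hv.measurable μ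
  · intro hle μ
    exact le_antisymm
      (concaveEnvelope_mono hw_le hw.measurable hv_le hv.measurable (wFun_le_vFun hS hR) μ)
      (concaveEnvelope_le_concaveEnvelope hv hv_le hw hw_le hle μ)

/-- **Global uniqueness.** The sender has a unique equilibrium payoff for every prior
(`ŵ = v̂` everywhere) if and only if `ŵ ≥ v` pointwise. -/
theorem unique_payoff_all_priors_iff
    {A Θ : Type*}
    [TopologicalSpace A] [CompactSpace A] [TopologicalSpace.MetrizableSpace A] [Nonempty A]
    [MeasurableSpace A] [BorelSpace A]
    [TopologicalSpace Θ] [CompactSpace Θ] [TopologicalSpace.MetrizableSpace Θ] [Nonempty Θ]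
    [MeasurableSpace Θ] [BorelSpace Θ]
    (uS uR : A → Θ → ℝ)
    (hS : Continuous fun p : A × Θ => uS p.1 p.2)
    (hR : Continuous fun p : A × Θ => uR p.1 p.2) :
    (∀ μ : ProbabilityMeasure Θ, wHat uS uR μ = vHat uS uR μ) ↔
      (∀ μ : ProbabilityMeasure Θ, vFun uS uR μ ≤ wHat uS uR μ) :=
  unique_payoff_all_priors_iff_general uS uR hS hR
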